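/- Quantitative duplicate bound: under any uniformly avoiding source μ, for every n ≥ k, the probability that some k-tuple occurs twice among the first n emitted characters — i.e., that there exist indices 0 ≤ i < j ≤ n - k with W_i = W_j — is at most n(n-1)/(2(σ-k)^k). -/

import Mathlib

open MeasureTheory ProbabilityTheory
open scoped Classical ENNReal

noncomputable section

/-- The `k`-window at position `i` of an infinite string `ω : ℕ → Fin σ`. -/
def Window {σ : ℕ} (k i : ℕ) (ω : ℕ → Fin σ) : Fin k → Fin σ :=
  fun t => ω (i + t)

/-- A *uniformly avoiding source*: a probability measure `μ` on `ℕ → Fin σ`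
(with the product σ-algebra) such that (i) almost surely the first `k`
coordinates are pairwise distinct, and (ii) conditioned on any positive-probability
history of length `n ≥ k` whose last `k` entries are pairwise distinct, the next
character is uniform on the `σ - k` characters not among the last `k` entries. -/
def UniformlyAvoiding {σ : ℕ} (k : ℕ) (μ : Measure (ℕ → Fin σ)) : Prop :=
  IsProbabilityMeasure μ ∧
  (∀ᵐ ω ∂μ, ∀ i j : ℕ, i < k → j < k → i ≠ j → ω i ≠ ω j) ∧
  ∀ n : ℕ, k ≤ n → ∀ a : ℕ → Fin σ,
    μ {ω | ∀ t < n, ω t = a t} ≠ 0 →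
    (∀ p q : ℕ, n - k ≤ p → p < n → n - k ≤ q → q < n → p ≠ q → a p ≠ a q) →
    ∀ b : Fin σ,
      (μ[|{ω | ∀ t < n, ω t = a t}]) {ω | ω n = b} =
        if ∃ t : ℕ, n - k ≤ t ∧ t < n ∧ a t = b then 0
        else 1 / ((σ - k : ℕ) : ℝ≥0∞)

lemma ua_measurable_hist {σ : ℕ} (n : ℕ) (a : ℕ → Fin σ) :
    MeasurableSet {ω : ℕ → Fin σ | ∀ t < n, ω t = a t} := by
  have : {ω : ℕ → Fin σ | ∀ t < n, ω t = a t} =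
      ⋂ t, ⋂ (_ : t < n), (fun ω : ℕ → Fin σ => ω t) ⁻¹' {a t} := by
    ext ω; simp
  rw [this]
  exact MeasurableSet.iInter fun t => MeasurableSet.iInter fun _ =>
    (measurable_pi_apply t) (measurableSet_singleton _)

lemma ua_distinct {σ k : ℕ} (μ : Measure (ℕ → Fin σ)) (hμ : UniformlyAvoiding k μ)
    (q : ℕ) : ∀ a : ℕ → Fin σ, μ {ω | ∀ t < q + 1, ω t = a t} ≠ 0 →
      ∀ p < q, q ≤ p + k → a p ≠ a q := by
  obtain ⟨hP, h1, h2⟩ := hμ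
  induction q using Nat.strong_induction_on with
  | _ q ih =>
    intro a ha p hp hq heq
    rcases lt_or_ge q k with hqk | hqk
    · apply ha
      refine measure_mono_null ?_ (ae_iff.1 h1)
      intro ω hω h
      refine h p q (by omega) hqk (by omega) ?_
      rw [hω p (by omega), hω q (by omega), heq]
    · have mono : ∀ r ≤ q, μ {ω | ∀ t < r, ω t = a t} ≠ 0 := fun r hr h0 =>
        ha (measure_mono_null (t := {ω | ∀ t < r, ω t = a t}) (fun ω hω t ht => hω t (lt_of_lt_of_le ht hr |>.trans_le (by omega))) h0)
      have key := h2 q hqk a (mono q le_rfl) (by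
        intro x y hx1 hx2 hy1 hy2 hxy
        rcases lt_or_gt_of_ne hxy with h | h
        · exact ih y hy2 a (mono (y+1) hy2) x h (by omega)
        · exact (ih x hx2 a (mono (x+1) hx2) y h (by omega)).symm) (a q)
      rw [if_pos ⟨p, by omega, hp, heq⟩, cond_apply (ua_measurable_hist q a)] at key
      rcases mul_eq_zero.1 key with h | h
      · exact measure_ne_top _ _ (ENNReal.inv_eq_zero.1 h)
      · apply ha
        refine measure_mono_null ?_ h
        intro ω hω
        exact ⟨fun t ht => hω t (by omega), hω q (by omega)⟩

lemma ua_step {σ k : ℕ} (μ : Measure (ℕ → Fin σ)) (hμ : UniformlyAvoiding k μ)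
    (n : ℕ) (hn : k ≤ n) (a : ℕ → Fin σ) (b : Fin σ) :
    μ ({ω | ∀ t < n, ω t = a t} ∩ {ω | ω n = b}) ≤
      μ {ω | ∀ t < n, ω t = a t} * ((σ - k : ℕ) : ℝ≥0∞)⁻¹ := by
  have hP := hμ.1
  by_cases h0 : μ {ω | ∀ t < n, ω t = a t} = 0
  · rw [measure_mono_null Set.inter_subset_left h0]; exact zero_le
  have mono : ∀ r ≤ n, μ {ω | ∀ t < r, ω t = a t} ≠ 0 := fun r hr h =>
    h0 (measure_mono_null (t := {ω | ∀ t < r, ω t = a t}) (fun ω hω t ht => hω t (lt_of_lt_of_le ht hr |>.trans_le (by omega))) h)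
  have key := hμ.2.2 n hn a h0 (by
        intro x y hx1 hx2 hy1 hy2 hxy
        rcases lt_or_gt_of_ne hxy with h | h
        · exact ua_distinct μ hμ y a (mono (y+1) hy2) x h (by omega)
        · exact (ua_distinct μ hμ x a (mono (x+1) hx2) y h (by omega)).symm) b
  rw [← cond_mul_eq_inter (ua_measurable_hist n a), key, mul_comm]
  gcongr
  split_ifs
  · exact zero_le
  · simp

lemma ua_event {σ k : ℕ} (μ : Measure (ℕ → Fin σ)) (hμ : UniformlyAvoiding k μ)
    (n : ℕ) (hn : k ≤ n) (i : ℕ) (hi : i < n) (E : Set (ℕ → Fin σ))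
    (hE : ∀ ω ω' : ℕ → Fin σ, (∀ t < n, ω t = ω' t) → ω ∈ E → ω' ∈ E) :
    μ (E ∩ {ω | ω i = ω n}) ≤ μ E * ((σ - k : ℕ) : ℝ≥0∞)⁻¹ := by
  let R : (ℕ → Fin σ) → (Fin n → Fin σ) := fun ω t => ω t
  have hR : Measurable R := measurable_pi_lambda _ fun t => measurable_pi_apply _
  have dec : ∀ F : Set (ℕ → Fin σ), μ F = ∑ c, μ (R ⁻¹' {c} ∩ F) := by
    intro F
    have := sum_measure_preimage_singleton (μ := μ.restrict F) (f := R) Finset.univ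
      (fun y _ => hR (measurableSet_singleton y))
    simp only [Finset.coe_univ, Set.preimage_univ, Measure.restrict_apply_univ] at this
    rw [← this]
    exact Finset.sum_congr rfl fun c _ => 
      Measure.restrict_apply (hR (measurableSet_singleton c))
  rw [dec E, dec (E ∩ _), Finset.sum_mul]
  refine Finset.sum_le_sum fun c _ => ?_
  by_cases hc : (R ⁻¹' {c} ∩ E).Nonempty
  · obtain ⟨a, hac, haE⟩ := hc
    have hset : R ⁻¹' {c} = {ω | ∀ t < n, ω t = a t} := by
      ext ω
      have hac' : R a = c := hac
      rw [← hac']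
      constructor
      · intro h t ht
        exact congrFun (show R ω = R a from h) ⟨t, ht⟩
      · intro h
        exact funext fun t => h t t.2
    have hsub : R ⁻¹' {c} ∩ E = {ω | ∀ t < n, ω t = a t} := by
      rw [hset]
      refine Set.inter_eq_left.2 fun ω hω => hE a ω (fun t ht => (hω t ht).symm) haE
    rw [hsub]
    refine le_trans (measure_mono ?_) (ua_step μ hμ n hn a (a i))
    rw [hset]
    rintro ω ⟨h, -, h'⟩
    exact ⟨h, by rw [← h i hi]; exact h'.symm⟩
  · rw [Set.not_nonempty_iff_eq_empty] at hc
    rw [← Set.inter_assoc, hc]; simp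

lemma ua_pow {σ k : ℕ} (μ : Measure (ℕ → Fin σ)) (hμ : UniformlyAvoiding k μ)
    (i j : ℕ) (hij : i < j) (hj : k ≤ j) (m : ℕ) :
    μ {ω | ∀ t < m, ω (i + t) = ω (j + t)} ≤ (((σ - k : ℕ) : ℝ≥0∞)⁻¹) ^ m := by
  have hP := hμ.1
  induction m with
  | zero => simp
  | succ m ih =>
    rw [pow_succ]
    refine le_trans (le_trans (measure_mono ?_) (ua_event μ hμ (j + m) (by omega) (i + m)
      (by omega) {ω | ∀ t < m, ω (i + t) = ω (j + t)} ?_)) (mul_le_mul_left ih _)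
    · intro ω hω
      exact ⟨fun t ht => hω t (by omega), hω m (by omega)⟩
    · intro ω ω' h hω t ht
      rw [← h _ (by omega), ← h _ (by omega)]
      exact hω t ht

lemma ua_pair {σ k : ℕ} (hk : 1 ≤ k) (μ : Measure (ℕ → Fin σ)) (hμ : UniformlyAvoiding k μ)
    (i j : ℕ) (hij : i < j) :
    μ {ω | Window k i ω = Window k j ω} ≤ (((σ - k : ℕ) : ℝ≥0∞)⁻¹) ^ k := by
  rcases lt_or_ge j k with hj | hj
  · refine le_trans (le_of_eq (measure_mono_null ?_ (ae_iff.1 hμ.2.1))) zero_le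
    intro ω hω h
    exact h i j (by omega) hj (by omega) (by simpa [Window] using congrFun hω ⟨0, hk⟩)
  · refine le_trans (measure_mono ?_) (ua_pow μ hμ i j hij hj k)
    intro ω hω t ht
    exact congrFun hω ⟨t, ht⟩

/-- Quantitative duplicate bound: under any uniformly avoiding source `μ`, for every
`n ≥ k`, the probability that some `k`-tuple occurs twice among the first `n` emitted
characters is at most `n(n-1)/(2(σ-k)^k)`. -/
theorem duplicate_window_prob_le {σ k : ℕ} (hk : 1 ≤ k) (hσ : k < σ)
    (μ : Measure (ℕ → Fin σ)) (hμ : UniformlyAvoiding k μ)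
    (n : ℕ) (hn : k ≤ n) :
    μ {ω | ∃ i j : ℕ, i < j ∧ j ≤ n - k ∧ Window k i ω = Window k j ω} ≤
      ((n * (n - 1) : ℕ) : ℝ≥0∞) / (2 * ((σ - k : ℕ) : ℝ≥0∞) ^ k) := by
  have hsub : {ω : ℕ → Fin σ | ∃ i j : ℕ, i < j ∧ j ≤ n - k ∧ Window k i ω = Window k j ω} ⊆
      ⋃ j ∈ Finset.range n, ⋃ i ∈ Finset.range j, {ω | Window k i ω = Window k j ω} := by
    rintro ω ⟨i, j, hij, hj, h⟩
    simp only [Set.mem_iUnion, Finset.mem_range]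
    exact ⟨j, by omega, i, hij, h⟩
  set c : ℝ≥0∞ := (((σ - k : ℕ) : ℝ≥0∞)⁻¹) ^ k with hc
  have hle : μ {ω | ∃ i j : ℕ, i < j ∧ j ≤ n - k ∧ Window k i ω = Window k j ω} ≤
      ((∑ j ∈ Finset.range n, j : ℕ) : ℝ≥0∞) * c := by
    refine (measure_mono hsub).trans ((measure_biUnion_finset_le _ _).trans ?_)
    rw [Nat.cast_sum, Finset.sum_mul]
    refine Finset.sum_le_sum fun j _ => (measure_biUnion_finset_le _ _).trans ?_
    refine (Finset.sum_le_sum fun i hi => ua_pair hk μ hμ i j (Finset.mem_range.1 hi)).trans ?_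
    simp [hc]
  refine hle.trans (le_of_eq ?_)
  rw [← Finset.sum_range_id_mul_two n, div_eq_mul_inv,
    ENNReal.mul_inv (Or.inl (by norm_num)) (Or.inl (by norm_num)), ENNReal.inv_pow, ← hc,
    Nat.cast_mul, Nat.cast_ofNat, ← mul_assoc, mul_assoc _ (2 : ℝ≥0∞),
    ENNReal.mul_inv_cancel (by norm_num) (by norm_num), mul_one]
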